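/- Let β = (β_1,…,β_{ℓ(β)}) be a composition with all parts at least 2 and ℓ(β) ≥ 3. If every 3-element sub-multiset {x,y,z} of the multiset {β_1,…,β_{ℓ(β)}} with x ≤ y ≤ z satisfies the strict triangle inequality z < x + y, then the connected ribbon R_β has full Schur support: [R_β] = [β^+, (|β|−ℓ(β)+1, ℓ(β)−1)], where β^+ is the weakly decreasing rearrangement of β. -/

import Mathlib

namespace RibbonSupport

/-- A partition: a weakly decreasing list of positive integers. -/
def IsPartition (a : List ℕ) : Prop := a.Pairwise (· ≥ ·) ∧ ∀ x ∈ a, 0 < x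

/-- All parts of the list are at least `m`. -/
def PartsGE (a : List ℕ) (m : ℕ) : Prop := ∀ x ∈ a, m ≤ x

/-- Dominance order `lam ⪯ mu` on partitions of the same size. -/
def DomLE (lam mu : List ℕ) : Prop :=
  lam.sum = mu.sum ∧ ∀ i, (lam.take i).sum ≤ (mu.take i).sum

/-- The number of nonzero parts. -/
def lenp (p : List ℕ) : ℕ := p.countP (fun x => decide (x ≠ 0))

/-- `p` is an overlapping partition for the monotone ribbon with row lengths `a`:
`p` has the same length as `a`, its last entry is `0`, and consecutive entries
decrease by `0` or `1`. -/
def IsOverlapSeq (a p : List ℕ) : Prop :=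
  p.length = a.length ∧ p.getD (a.length - 1) 0 = 0 ∧
    ∀ i, i + 1 < a.length →
      p.getD i 0 = p.getD (i + 1) 0 ∨ p.getD i 0 = p.getD (i + 1) 0 + 1

/-- Rows `i` and `i+1` (0-based, top to bottom) of `R_a^p` overlap
(share exactly one column) exactly when `p_i = p_{i+1} + 1`. -/
def ovOf (p : List ℕ) : ℕ → Bool := fun i => decide (p.getD i 0 = p.getD (i + 1) 0 + 1)

def rowOffset (a : List ℕ) (i : ℕ) : ℕ := (a.take i).sum

/-- `w` is the reading word (rows right-to-left, top to bottom) of a semistandard filling of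
the ribbon with row lengths `a` (top to bottom) in which consecutive rows `i`, `i+1` share
exactly one column when `ov i = true` and no column otherwise.  Semistandardness amounts to:
within each row block the word is weakly decreasing (rows weakly increase left to right), and
at each overlapping gap the word strictly increases (columns strictly increase downwards). -/
def IsRibbonWord (a : List ℕ) (ov : ℕ → Bool) (w : List ℕ) : Prop :=
  w.length = a.sum ∧
  (∀ i j, i < a.length → j + 1 < a.getD i 0 →
    w.getD (rowOffset a i + j + 1) 0 ≤ w.getD (rowOffset a i + j) 0) ∧
  (∀ i, i + 1 < a.length → ov i = true →
    w.getD (rowOffset a (i + 1) - 1) 0 < w.getD (rowOffset a (i + 1)) 0)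

/-- Yamanouchi (lattice) word: each prefix has at least as many letters `j` as `j+1`. -/
def IsYam (w : List ℕ) : Prop := ∀ k j, (w.take k).count (j + 2) ≤ (w.take k).count (j + 1)

/-- The word `w` has content `nu` (and only positive letters). -/
def HasContent (w : List ℕ) (nu : List ℕ) : Prop :=
  (∀ j, w.count (j + 1) = nu.getD j 0) ∧ w.count 0 = 0

/-- There is an LR filling of the ribbon `(a, ov)` with content `nu`. -/
def InSupportOv (a : List ℕ) (ov : ℕ → Bool) (nu : List ℕ) : Prop :=
  ∃ w : List ℕ, IsRibbonWord a ov w ∧ IsYam w ∧ HasContent w nu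

/-- `nu` is in the Schur support of the monotone ribbon `R_a^p`. -/
def InSupport (a p nu : List ℕ) : Prop := InSupportOv a (ovOf p) nu

/-- `nu` is in the Schur support of the connected ribbon `R_a`. -/
def InSupportConn (a nu : List ℕ) : Prop := InSupportOv a (fun _ => true) nu

/-- `nu` belongs to the Schur interval `[a, (|a| - p₁, p₁)]` in dominance order. -/
def InInterval (a p nu : List ℕ) : Prop :=
  DomLE a nu ∧ DomLE nu [a.sum - p.getD 0 0, p.getD 0 0]

/-- The Schur support of `R_a^p`, as a set of partitions. -/
def SupportSet (a p : List ℕ) : Set (List ℕ) := {nu | IsPartition nu ∧ InSupport a p nu}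

/-- The Schur interval of `R_a^p`, as a set of partitions. -/
def IntervalSet (a p : List ℕ) : Set (List ℕ) := {nu | IsPartition nu ∧ InInterval a p nu}

/-- `R_a^p` has full Schur support. -/
def FullSupport (a p : List ℕ) : Prop := SupportSet a p = IntervalSet a p

/-- The Schur support of the connected ribbon `R_a`, as a set of partitions. -/
def SupportSetConn (a : List ℕ) : Set (List ℕ) := {nu | IsPartition nu ∧ InSupportConn a nu}

/-- `ϱ_i` (1-based `i`): `Σ_{q=i+1}^{ℓ(a)} a_q − p_{i+1} + 1`. -/
def rho (a p : List ℕ) (i : ℕ) : ℕ := (a.drop i).sum + 1 - p.getD i 0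

/-- Entry `j` (1-based) of the `i`-witness vector: `[ϱ_i − a_j]₊`. -/
def wit (a p : List ℕ) (i j : ℕ) : ℕ := rho a p i - a.getD (j - 1) 0

/-- Size of the `i`-witness vector. -/
def witSize (a p : List ℕ) (i : ℕ) : ℕ := ∑ j ∈ Finset.Icc 1 i, wit a p i j

/-! ### Tableaux -/

/-- Cells (0-based `(row, column)`) of the Young diagram of `lam`. -/
def cells (lam : List ℕ) : Finset (ℕ × ℕ) :=
  (Finset.range lam.length ×ˢ Finset.range (lam.sum + 1)).filter
    (fun x => x.2 < lam.getD x.1 0)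

/-- `T` is a semistandard Young tableau of shape `lam` and content `al`
(normalized to vanish off the diagram). -/
def IsTab (lam al : List ℕ) (T : ℕ × ℕ → ℕ) : Prop :=
  (∀ x, x ∉ cells lam → T x = 0) ∧
  (∀ x ∈ cells lam, 1 ≤ T x) ∧
  (∀ i c, (i, c + 1) ∈ cells lam → T (i, c) ≤ T (i, c + 1)) ∧
  (∀ i c, (i + 1, c) ∈ cells lam → T (i, c) < T (i + 1, c)) ∧
  (∀ k, ((cells lam).filter (fun x => T x = k + 1)).card = al.getD k 0)

/-- Standardization of a tableau: entries are renumbered `1, …, N` in increasing order of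
value, entries of equal value being numbered from southwest to northeast (by column). -/
def stdz (lam : List ℕ) (T : ℕ × ℕ → ℕ) : ℕ × ℕ → ℕ := fun x =>
  if x ∈ cells lam then
    ((cells lam).filter (fun y => T y < T x ∨ (T y = T x ∧ y.2 < x.2))).card + 1
  else 0

/-- `n` is a descent of the standard tableau `U`: the entry `n+1` lies in a strictly
lower row than the entry `n`. -/
def IsDescent (lam : List ℕ) (U : ℕ × ℕ → ℕ) (n : ℕ) : Prop :=
  ∃ x ∈ cells lam, ∃ y ∈ cells lam, U x = n ∧ U y = n + 1 ∧ x.1 < y.1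

/-- `S(al)`: the set of proper partial sums of the composition `al`. -/
def Sset (al : List ℕ) : Set ℕ := {n | ∃ k, 0 < k ∧ k < al.length ∧ n = (al.take k).sum}

/-- `s ∈ D(T)`: some entry `s+1` of `T` lies in a strictly lower row than some entry `s`. -/
def TabDescent (lam : List ℕ) (T : ℕ × ℕ → ℕ) (s : ℕ) : Prop :=
  ∃ x ∈ cells lam, ∃ y ∈ cells lam, T x = s ∧ T y = s + 1 ∧ x.1 < y.1

/-- The word `w_{T̂}` of `T`: its `u`-th letter (1-based) is the 1-based row index of the
entry `u` of the standardization `T̂` of `T`. -/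
def wordOf (lam : List ℕ) (T : ℕ × ℕ → ℕ) : List ℕ :=
  (List.range lam.sum).map fun n =>
    ∑ x ∈ (cells lam).filter (fun x => stdz lam T x = n + 1), (x.1 + 1)

/-- `j ∈ {2, …, ℓ(al)}` is a critical number of `T ∈ Tab(lam, al)`:
`w_{α_1+⋯+α_{j-1}} = w_{α_1+⋯+α_{j-1}+1}` in the word of `T`. -/
def CriticalNum (lam al : List ℕ) (T : ℕ × ℕ → ℕ) (j : ℕ) : Prop :=
  2 ≤ j ∧ j ≤ al.length ∧
    (wordOf lam T).getD ((al.take (j - 1)).sum - 1) 0 =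
      (wordOf lam T).getD ((al.take (j - 1)).sum) 0

/-- `j ∈ {2, …, ℓ(al)}` is a negligible critical number of `T`:
`w_{α_1+⋯+α_{j-1}} > w_{α_1+⋯+α_{j-1}+1}` in the word of `T`. -/
def NegligibleNum (lam al : List ℕ) (T : ℕ × ℕ → ℕ) (j : ℕ) : Prop :=
  2 ≤ j ∧ j ≤ al.length ∧
    (wordOf lam T).getD ((al.take (j - 1)).sum) 0 <
      (wordOf lam T).getD ((al.take (j - 1)).sum - 1) 0

/-- The overlapping partition of the ribbon encoded by its gap pattern `b`
(`b j = true` iff rows `j` and `j+1`, 0-based, overlap). -/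
def povOf (b : List Bool) : List ℕ :=
  (List.range (b.length + 1)).map fun i => (b.drop i).count true

/-! ### Connected ribbons with rows in arbitrary order -/

/-- Starting column (0-based) of row `i` of the connected ribbon with row lengths `b`. -/
def startConn (b : List ℕ) (i : ℕ) : ℕ := (b.drop (i + 1)).sum + (i + 1) - b.length

/-- Number of columns of the connected ribbon with row lengths `b`. -/
def ncols (b : List ℕ) : ℕ := b.sum + 1 - b.length

/-- Length of column `c` of the connected ribbon with row lengths `b`. -/
def colLen (b : List ℕ) (c : ℕ) : ℕ :=
  ((Finset.range b.length).filter
    (fun i => startConn b i ≤ c ∧ c < startConn b i + b.getD i 0)).card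

/-- Deletion rank of row `j`: the number of rows deleted strictly before row `j` when one
repeatedly deletes a longest remaining row in highest (most northern) position. -/
def delRank (g : List ℕ) (j : ℕ) : ℕ :=
  ((Finset.range g.length).filter
    (fun j' => g.getD j 0 < g.getD j' 0 ∨ (g.getD j' 0 = g.getD j 0 ∧ j' < j))).card

/-- The overlapping partition of the connected ribbon with row lengths `g`:
its `(d+1)`-st entry is the number of length-two columns of the ribbon remaining
after deleting `d` rows as above, i.e. the number of adjacent pairs of surviving rows. -/
def ppiList (g : List ℕ) : List ℕ :=
  (List.range g.length).map fun d =>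
    ((Finset.range (g.length - 1)).filter
      (fun j => d ≤ delRank g j ∧ d ≤ delRank g (j + 1))).card

/-!
Cut an LR filling of `R_{b·m}` with content `ν` before its last row. The first part is an LR filling
of `R_b`. The last row, read from right to left, is weakly decreasing, so that the Yamanouchi
condition turns it into a horizontal strip of size `m` removed from the shape `ν`. The column shared
by the last two rows asks that the largest letter of the last row, i.e. the lowest row met by the
strip, exceed the last letter of the filling of `R_b`. Conversely, any such strip and filling can be
put together, and everything is done by induction on the number of rows of the ribbon.

The necessary conditions on `ν` follow since a horizontal strip has at most `ν (k + 1)` cells below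
row `k`, and since no row of the ribbon but the first consists of letters `1` only.

For sufficiency, the horizontal strip must be chosen so that `ν - d` satisfies the necessary
conditions for `b` again, while the filling of `R_b` must not end in the lowest row met by the
strip. The strip takes the bottom cells of as many of the first columns as possible and completes
them by the end of the first row. If it leaves cells in the bottom row, then either the first row of
`ν - d` has the largest possible length, or the last two rows of `ν - d` differ by at least `m`. By
the triangle inequality `m` forms a triangle with any two parts of `b`, and this condition lets
the induction produce a filling of `R_b` that does not end in the bottom row: the strip of the next
step can be kept from lying entirely in the bottom row, by moving one of its cells up if necessary.
-/

/-! ### Sums of parts -/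

lemma sum_take_eq_sum_range_getD (l : List ℕ) (k : ℕ) :
    (l.take k).sum = ∑ i ∈ Finset.range k, l.getD i 0 := by
  induction l generalizing k with
  | nil => simp
  | cons a l ih =>
    cases k with
    | zero => simp
    | succ k => simp [Finset.sum_range_succ', ih, add_comm]

lemma sum_take_le_sum (l : List ℕ) (k : ℕ) : (l.take k).sum ≤ l.sum :=
  (List.take_sublist k l).sum_le_sum fun _ _ => Nat.zero_le _

lemma sum_le_sum_take_of_sublist {l : List ℕ} (hl : l.Pairwise (· ≥ ·)) {s : List ℕ}
    (hs : s.Sublist l) : s.sum ≤ (l.take s.length).sum := by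
  induction l generalizing s with
  | nil => simp [List.sublist_nil.1 hs]
  | cons a l ih =>
    rw [List.pairwise_cons] at hl
    cases s with
    | nil => simp
    | cons x s =>
      have hx : x ≤ a := (List.mem_cons.1 (hs.subset List.mem_cons_self)).elim le_of_eq (hl.1 x)
      simpa using add_le_add hx (ih hl.2 hs.of_cons_cons)

lemma PartsGE.mono {b : List ℕ} {j k : ℕ} (hb : PartsGE b k) (hjk : j ≤ k) : PartsGE b j :=
  fun x hx => hjk.trans (hb x hx)

lemma partsGE_append_singleton {b : List ℕ} {m k : ℕ} :
    PartsGE (b ++ [m]) k ↔ PartsGE b k ∧ k ≤ m := by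
  simp [PartsGE, or_imp, forall_and]

lemma PartsGE.sum_add_mul_length_le {b s : List ℕ} {k : ℕ} (hb : PartsGE b k)
    (hs : s.Sublist b) : s.sum + k * b.length ≤ b.sum + k * s.length := by
  induction hs with
  | slnil => rfl
  | @cons s b a _ ih =>
    have ha : k ≤ a := hb a List.mem_cons_self
    have := ih fun x hx => hb x (List.mem_cons_of_mem a hx)
    simp only [List.sum_cons, List.length_cons, mul_add_one]
    lia
  | @cons_cons s b a _ ih =>
    have := ih fun x hx => hb x (List.mem_cons_of_mem a hx)
    simp only [List.sum_cons, List.length_cons, mul_add_one]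
    lia

lemma PartsGE.mul_length_le_sum {b : List ℕ} {k : ℕ} (hb : PartsGE b k) :
    k * b.length ≤ b.sum := by
  simpa using hb.sum_add_mul_length_le (List.nil_sublist b)

/-! ### Ribbon words -/

lemma pairwise_ge_iff_getD {v : List ℕ} :
    v.Pairwise (· ≥ ·) ↔ ∀ j, j + 1 < v.length → v.getD (j + 1) 0 ≤ v.getD j 0 := by
  rw [← List.isChain_iff_pairwise, List.isChain_iff_getElem]
  refine forall₂_congr fun j hj => ?_
  rw [List.getD_eq_getElem _ _ hj, List.getD_eq_getElem _ _ (Nat.lt_of_succ_lt hj)]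

lemma rowOffset_append_of_le {b c : List ℕ} {i : ℕ} (hi : i ≤ b.length) :
    rowOffset (b ++ c) i = rowOffset b i := by
  rw [rowOffset, List.take_append_of_le_length hi, rowOffset]

lemma rowOffset_length (b : List ℕ) : rowOffset b b.length = b.sum := by
  rw [rowOffset, List.take_length]

lemma rowOffset_add_getD_le {b : List ℕ} {i : ℕ} (hi : i < b.length) :
    rowOffset b i + b.getD i 0 ≤ b.sum := by
  rw [rowOffset, List.getD_eq_getElem _ _ hi, ← List.sum_take_succ _ _ hi]
  exact sum_take_le_sum b (i + 1)

/-- The `i`-th row of the filling `w` of the ribbon `b`, read from right to left, is weakly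
decreasing. -/
def RowDecreasing (b w : List ℕ) (i : ℕ) : Prop :=
  ∀ j, j + 1 < b.getD i 0 →
    w.getD (rowOffset b i + j + 1) 0 ≤ w.getD (rowOffset b i + j) 0

/-- The filling `w` of the ribbon `b` increases down the column shared by the rows `i` and
`i + 1`, whose two entries are the last letter of row `i` and the first letter of row `i + 1`. -/
def ColumnIncreasing (b w : List ℕ) (i : ℕ) : Prop :=
  w.getD (rowOffset b (i + 1) - 1) 0 < w.getD (rowOffset b (i + 1)) 0

lemma isRibbonWord_iff {b w : List ℕ} {ov : ℕ → Bool} :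
    IsRibbonWord b ov w ↔ w.length = b.sum ∧ (∀ i < b.length, RowDecreasing b w i) ∧
      ∀ i, i + 1 < b.length → ov i = true → ColumnIncreasing b w i :=
  and_congr_right fun _ => and_congr_left fun _ => forall_congr' fun _ => forall_comm

section AppendRow

variable {b w v : List ℕ} {m i : ℕ}

lemma rowDecreasing_append_of_lt (hw : w.length = b.sum) (hi : i < b.length) :
    RowDecreasing (b ++ [m]) (w ++ v) i ↔ RowDecreasing b w i := by
  have hsum := rowOffset_add_getD_le hi
  unfold RowDecreasing
  rw [rowOffset_append_of_le hi.le, List.getD_append _ _ _ _ hi]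
  refine forall₂_congr fun j hj => ?_
  rw [List.getD_append _ _ _ _ (by lia), List.getD_append _ _ _ _ (by lia)]

lemma rowDecreasing_append_length (hw : w.length = b.sum) (hv : v.length = m) :
    RowDecreasing (b ++ [m]) (w ++ v) b.length ↔ v.Pairwise (· ≥ ·) := by
  unfold RowDecreasing
  rw [rowOffset_append_of_le le_rfl, rowOffset_length, pairwise_ge_iff_getD,
    List.getD_append_right _ _ _ _ le_rfl, Nat.sub_self, List.getD_cons_zero, hv, ← hw]
  refine forall₂_congr fun j _ => ?_
  rw [add_assoc, List.getD_append_right _ _ _ _ (by lia),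
    List.getD_append_right _ _ _ _ (by lia), Nat.add_sub_cancel_left, Nat.add_sub_cancel_left]

lemma columnIncreasing_append_of_lt (hw : w.length = b.sum) (hb : PartsGE b 1)
    (hi : i + 1 < b.length) :
    ColumnIncreasing (b ++ [m]) (w ++ v) i ↔ ColumnIncreasing b w i := by
  have hsum := rowOffset_add_getD_le hi
  have hpos : 1 ≤ b.getD (i + 1) 0 := by
    rw [List.getD_eq_getElem _ _ hi]
    exact hb _ (List.getElem_mem hi)
  unfold ColumnIncreasing
  rw [rowOffset_append_of_le hi.le, List.getD_append _ _ _ _ (by lia),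
    List.getD_append _ _ _ _ (by lia)]

lemma columnIncreasing_append_of_succ_eq (hw : w.length = b.sum) (hb : PartsGE b 1)
    (hi : i + 1 = b.length) :
    ColumnIncreasing (b ++ [m]) (w ++ v) i ↔ w.getLastD 0 < v.headD 0 := by
  have hpos := hb.mul_length_le_sum
  unfold ColumnIncreasing
  rw [hi, rowOffset_append_of_le le_rfl, rowOffset_length, ← hw,
    List.getD_append _ _ _ _ (by lia), List.getD_append_right _ _ _ _ le_rfl, Nat.sub_self,
    List.getLastD_eq_getLast?, List.getLast?_eq_getElem?, List.headD_eq_getD,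
    List.getD_eq_getElem?_getD]

lemma isRibbonWord_append_singleton {ov : ℕ → Bool} (hw : w.length = b.sum) (hv : v.length = m)
    (hb : PartsGE b 1) :
    IsRibbonWord (b ++ [m]) ov (w ++ v) ↔ IsRibbonWord b ov w ∧ v.Pairwise (· ≥ ·) ∧
      ∀ i, i + 1 = b.length → ov i = true → w.getLastD 0 < v.headD 0 := by
  have hrows : (∀ i < (b ++ [m]).length, RowDecreasing (b ++ [m]) (w ++ v) i) ↔
      (∀ i < b.length, RowDecreasing b w i) ∧ v.Pairwise (· ≥ ·) := by
    rw [List.length_append, List.length_singleton, Nat.forall_lt_succ_right,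
      rowDecreasing_append_length hw hv]
    exact and_congr_left fun _ => forall₂_congr fun i hi => rowDecreasing_append_of_lt hw hi
  have hcols : (∀ i, i + 1 < (b ++ [m]).length → ov i = true →
        ColumnIncreasing (b ++ [m]) (w ++ v) i) ↔
      (∀ i, i + 1 < b.length → ov i = true → ColumnIncreasing b w i) ∧
        ∀ i, i + 1 = b.length → ov i = true → w.getLastD 0 < v.headD 0 := by
    simp only [List.length_append, List.length_singleton, Nat.lt_succ_iff_lt_or_eq, or_imp,
      forall_and]
    exact and_congr
      (forall₃_congr fun i hi _ => columnIncreasing_append_of_lt hw hb hi)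
      (forall₃_congr fun i hi _ => columnIncreasing_append_of_succ_eq hw hb hi)
  have hlen : (w ++ v).length = (b ++ [m]).sum ↔ w.length = b.sum := by simp [hv]
  rw [isRibbonWord_iff, isRibbonWord_iff, hlen, hrows, hcols]
  tauto

end AppendRow

/-! ### Yamanouchi words -/

section Yamanouchi

variable {w v : List ℕ}

lemma IsYam.of_append (h : IsYam (w ++ v)) : IsYam w := fun k j => by
  rw [List.take_eq_take_min, ← List.take_append_of_le_length (l₂ := v) (min_le_right _ _)]
  exact h _ j

lemma IsYam.append (h : IsYam w)
    (hv : ∀ j, w.count (j + 2) + v.count (j + 2) ≤ w.count (j + 1)) : IsYam (w ++ v) := by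
  intro k j
  rw [List.take_append, List.count_append, List.count_append]
  rcases le_total k w.length with hk | hk
  · simpa [Nat.sub_eq_zero_of_le hk] using h k j
  · rw [List.take_of_length_le hk]
    have := (List.take_sublist (k - w.length) v).count_le (j + 2)
    have := hv j
    lia

-- Only the prefix of `v` formed by its letters `≥ j + 2` matters: it contains every `j + 2` of `v`
-- but no `j + 1`.
lemma IsYam.count_append_le (h : IsYam (w ++ v)) (hv : v.Pairwise (· ≥ ·)) (j : ℕ) :
    (w ++ v).count (j + 2) ≤ w.count (j + 1) := by
  induction v generalizing w with
  | nil => simpa using h w.length j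
  | cons a v ih =>
    rw [List.pairwise_cons] at hv
    by_cases ha : j + 2 ≤ a
    · have hne : a ≠ j + 1 := by lia
      simpa [hne] using ih (w := w ++ [a]) (by simpa using h) hv.2
    · have hnot : j + 2 ∉ a :: v := by
        rintro (_ | ⟨_, hmem⟩)
        · exact ha le_rfl
        · exact ha (hv.1 _ hmem)
      rw [List.count_append, List.count_eq_zero.2 hnot, add_zero]
      simpa using h w.length j

end Yamanouchi

/-! ### Horizontal strips -/

/-- Removing `d i` cells from row `i` of the shape `ν`, for every `i`, removes a horizontal strip.
The condition entails that `ν` is weakly decreasing. -/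
def IsHorizontalStrip (ν d : ℕ → ℕ) : Prop := ∀ i, ν (i + 1) + d i ≤ ν i

/-- The weakly decreasing word with `d i` letters `i + 1` for `i < r` and no others. -/
def rowWord (d : ℕ → ℕ) : ℕ → List ℕ
  | 0 => []
  | r + 1 => List.replicate (d r) (r + 1) ++ rowWord d r

section Strip

variable {ν d : ℕ → ℕ}

lemma IsHorizontalStrip.le (hd : IsHorizontalStrip ν d) : d ≤ ν :=
  fun i => (Nat.le_add_left _ _).trans (hd i)

lemma IsHorizontalStrip.antitone_sub (hd : IsHorizontalStrip ν d) : Antitone (ν - d) := by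
  refine antitone_nat_of_succ_le fun i => ?_
  have := hd i
  simp only [Pi.sub_apply]
  lia

lemma sum_range_sub_add_sum_range (hd : d ≤ ν) (k : ℕ) :
    ∑ i ∈ Finset.range k, (ν - d) i + ∑ i ∈ Finset.range k, d i =
      ∑ i ∈ Finset.range k, ν i := by
  rw [← Finset.sum_add_distrib]
  exact Finset.sum_congr rfl fun i _ => Nat.sub_add_cancel (hd i)

-- The cells of a horizontal strip below its first `k` rows lie in distinct columns of row `k`.
lemma IsHorizontalStrip.sum_range_le (hd : IsHorizontalStrip ν d) (n k : ℕ) :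
    ∑ i ∈ Finset.range n, d i ≤ ∑ i ∈ Finset.range k, d i + ν k := by
  rcases le_total n k with hnk | hkn
  · exact (Finset.sum_le_sum_of_subset (Finset.range_mono hnk)).trans (Nat.le_add_right _ _)
  · suffices ∑ i ∈ Finset.range n, d i + ν n ≤ ∑ i ∈ Finset.range k, d i + ν k from
      (Nat.le_add_right _ _).trans this
    induction n, hkn using Nat.le_induction with
    | base => rfl
    | succ n _ ih =>
      have := hd n
      rw [Finset.sum_range_succ]
      lia

lemma le_of_mem_rowWord {r x : ℕ} (hx : x ∈ rowWord d r) : x ≤ r := by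
  induction r with
  | zero => simp [rowWord] at hx
  | succ r ih =>
    rcases List.mem_append.1 hx with hx | hx
    · exact (List.eq_of_mem_replicate hx).le
    · exact (ih hx).trans r.le_succ

lemma zero_notMem_rowWord (d : ℕ → ℕ) (r : ℕ) : 0 ∉ rowWord d r := by
  induction r with
  | zero => simp [rowWord]
  | succ r ih => simp [rowWord, ih]

lemma length_rowWord (d : ℕ → ℕ) (r : ℕ) :
    (rowWord d r).length = ∑ i ∈ Finset.range r, d i := by
  induction r with
  | zero => rfl
  | succ r ih => simp [rowWord, ih, Finset.sum_range_succ, add_comm]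

lemma pairwise_rowWord (d : ℕ → ℕ) (r : ℕ) : (rowWord d r).Pairwise (· ≥ ·) := by
  induction r with
  | zero => exact List.Pairwise.nil
  | succ r ih =>
    refine List.pairwise_append.2 ⟨by simp, ih, fun x hx y hy => ?_⟩
    rw [List.eq_of_mem_replicate hx]
    exact (le_of_mem_rowWord hy).trans r.le_succ

lemma count_rowWord_of_le {r i : ℕ} (hi : r ≤ i) : (rowWord d r).count (i + 1) = 0 :=
  List.count_eq_zero.2 fun hmem => (le_of_mem_rowWord hmem).not_gt (Nat.lt_succ_of_le hi)

lemma count_rowWord_of_lt {r i : ℕ} (hi : i < r) : (rowWord d r).count (i + 1) = d i := by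
  induction r, hi using Nat.le_induction with
  | base => simp [rowWord, count_rowWord_of_le le_rfl]
  | succ r hir ih =>
    have hne : r ≠ i := (Nat.lt_of_succ_le hir).ne'
    simp [rowWord, ih, List.count_replicate, hne]

lemma count_rowWord {r : ℕ} (hd : ∀ i, r ≤ i → d i = 0) (i : ℕ) :
    (rowWord d r).count (i + 1) = d i :=
  (lt_or_ge i r).elim count_rowWord_of_lt fun hi => (count_rowWord_of_le hi).trans (hd i hi).symm

lemma headD_rowWord_succ {r : ℕ} (hr : 0 < d r) : (rowWord d (r + 1)).headD 0 = r + 1 := by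
  obtain ⟨n, hn⟩ := Nat.exists_eq_succ_of_ne_zero hr.ne'
  simp [rowWord, hn, List.replicate_succ]

lemma getLastD_append_rowWord_le {r i : ℕ} (w : List ℕ) (hi : i < r) (hdi : 0 < d i) :
    (w ++ rowWord d r).getLastD 0 ≤ i + 1 := by
  have hmem : i + 1 ∈ rowWord d r := by
    rw [← List.count_pos_iff, count_rowWord_of_lt hi]
    exact hdi
  rw [List.getLastD_eq_getLast?,
    List.getLast?_append_of_ne_nil _ (List.ne_nil_of_mem hmem),
    List.getLast?_eq_some_getLast (List.ne_nil_of_mem hmem), Option.getD_some]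
  exact (pairwise_rowWord d r).rel_getLast hmem

end Strip

/-! ### LR fillings of connected ribbons, row by row -/

/-- `w` is the reading word of an LR filling of the connected ribbon `R_b` with `ν i` entries equal
to `i + 1`; the content `ν` is indexed from `0`, so that `ν i` is the length of row `i` of the
corresponding shape. -/
structure IsLRFilling (b : List ℕ) (ν : ℕ → ℕ) (w : List ℕ) : Prop where
  ribbon : IsRibbonWord b (fun _ => true) w
  yam : IsYam w
  count_succ : ∀ i, w.count (i + 1) = ν i
  zero_notMem : 0 ∉ w

lemma inSupportConn_iff {b nu : List ℕ} :
    InSupportConn b nu ↔ ∃ w, IsLRFilling b (fun i => nu.getD i 0) w :=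
  exists_congr fun _ =>
    ⟨fun ⟨hr, hy, hc, hz⟩ => ⟨hr, hy, hc, List.count_eq_zero.1 hz⟩,
      fun h => ⟨h.ribbon, h.yam, h.count_succ, List.count_eq_zero.2 h.zero_notMem⟩⟩

lemma isLRFilling_nil : IsLRFilling [] (fun _ => 0) [] where
  ribbon := ⟨rfl, by simp, by simp⟩
  yam _ _ := by simp
  count_succ _ := rfl
  zero_notMem := List.not_mem_nil

lemma sum_range_count_succ {w : List ℕ} (hw : 0 ∉ w) {n : ℕ} (hn : ∀ x ∈ w, x ≤ n) :
    ∑ i ∈ Finset.range n, w.count (i + 1) = w.length := by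
  have h := Multiset.sum_count_eq_card (s := Finset.range (n + 1)) (m := (w : Multiset ℕ))
    fun x hx => Finset.mem_range_succ_iff.2 (hn x hx)
  simpa [Finset.sum_range_succ', List.count_eq_zero.2 hw] using h

lemma getLastD_mem {w : List ℕ} (hw : w ≠ []) : w.getLastD 0 ∈ w := by
  rw [List.getLastD_eq_getLast?, List.getLast?_eq_some_getLast hw]
  exact List.getLast_mem hw

section Filling

variable {b w : List ℕ} {m r : ℕ} {ν d : ℕ → ℕ}

lemma IsLRFilling.le_of_mem (hw : IsLRFilling b ν w) (hν : ∀ i, r ≤ i → ν i = 0) {x : ℕ}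
    (hx : x ∈ w) : x ≤ r := by
  obtain ⟨i, rfl⟩ := Nat.exists_eq_succ_of_ne_zero (ne_of_mem_of_not_mem hx hw.zero_notMem)
  refine Nat.succ_le_of_lt (not_le.1 fun hi => ?_)
  exact (List.count_pos_iff.2 hx).ne' ((hw.count_succ i).trans (hν i hi))

lemma IsLRFilling.sum_range_eq (hw : IsLRFilling b ν w) (hν : ∀ i, r ≤ i → ν i = 0) :
    ∑ i ∈ Finset.range r, ν i = b.sum := by
  rw [← hw.ribbon.1, ← sum_range_count_succ hw.zero_notMem fun _ => hw.le_of_mem hν]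
  exact Finset.sum_congr rfl fun i _ => (hw.count_succ i).symm

lemma IsLRFilling.getLastD_le (hw : IsLRFilling b ν w) (hν : ∀ i, r ≤ i → ν i = 0) :
    w.getLastD 0 ≤ r := by
  rcases eq_or_ne w [] with rfl | hne
  · exact Nat.zero_le r
  · exact hw.le_of_mem hν (getLastD_mem hne)

lemma IsLRFilling.eq_zero_of_nil (hw : IsLRFilling [] ν w) (i : ℕ) : ν i = 0 := by
  rw [← hw.count_succ, List.length_eq_zero_iff.1 hw.ribbon.1, List.count_nil]

lemma IsLRFilling.append_rowWord (hw : IsLRFilling b (ν - d) w) (hb : PartsGE b 1)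
    (hd : IsHorizontalStrip ν d) (hν : ∀ i, r + 1 ≤ i → ν i = 0)
    (hm : ∑ i ∈ Finset.range (r + 1), d i = m) (hr : 0 < d r) (hlast : w.getLastD 0 < r + 1) :
    IsLRFilling (b ++ [m]) ν (w ++ rowWord d (r + 1)) := by
  have hcount : ∀ i, (rowWord d (r + 1)).count (i + 1) = d i :=
    count_rowWord fun i hi => Nat.eq_zero_of_le_zero ((hd.le i).trans_eq (hν i hi))
  refine ⟨?_, hw.yam.append fun j => ?_, fun i => ?_, ?_⟩
  · refine (isRibbonWord_append_singleton hw.ribbon.1 ((length_rowWord d _).trans hm) hb).2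
      ⟨hw.ribbon, pairwise_rowWord d _, fun _ _ _ => ?_⟩
    rwa [headD_rowWord_succ hr]
  · rw [hcount, hw.count_succ, hw.count_succ, Pi.sub_apply, Pi.sub_apply,
      Nat.sub_add_cancel (hd.le _)]
    exact Nat.le_sub_of_add_le (hd j)
  · rw [List.count_append, hcount, hw.count_succ, Pi.sub_apply, Nat.sub_add_cancel (hd.le i)]
  · simp [hw.zero_notMem, zero_notMem_rowWord]

lemma IsLRFilling.exists_isHorizontalStrip (hw : IsLRFilling (b ++ [m]) ν w)
    (hb : PartsGE b 1) :
    ∃ d w', IsHorizontalStrip ν d ∧ IsLRFilling b (ν - d) w' ∧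
      (∃ n, ∑ i ∈ Finset.range n, d i = m) ∧ d 0 ≤ m ∧ (b ≠ [] → d 0 < m) := by
  obtain ⟨w, v, rfl, hwlen, hvlen⟩ :
      ∃ w' v, w = w' ++ v ∧ w'.length = b.sum ∧ v.length = m := by
    have hlen := hw.ribbon.1
    rw [List.sum_append, List.sum_singleton] at hlen
    exact ⟨_, _, (List.take_append_drop b.sum w).symm, by simp [hlen], by simp [hlen]⟩
  obtain ⟨hrib, hpw, hlast⟩ := (isRibbonWord_append_singleton hwlen hvlen hb).1 hw.ribbon
  have hzero := hw.zero_notMem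
  rw [List.mem_append, not_or] at hzero
  have hcount : ∀ i, w.count (i + 1) + v.count (i + 1) = ν i := fun i => by
    rw [← List.count_append, hw.count_succ]
  refine ⟨fun i => v.count (i + 1), w, fun i => ?_,
    ⟨hrib, hw.yam.of_append, fun i => ?_, hzero.1⟩, ⟨v.sum, ?_⟩, ?_, fun hne => ?_⟩
  · rw [← hcount i, ← hw.count_succ]
    exact Nat.add_le_add_right (hw.yam.count_append_le hpw i) _
  · rw [Pi.sub_apply, ← hcount i, Nat.add_sub_cancel]
  · rw [sum_range_count_succ hzero.2 fun _ => List.le_sum_of_mem, hvlen]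
  · exact List.count_le_length.trans_eq hvlen
  -- The first letter of `v` exceeds a positive letter, hence is not a `1`.
  · have hblen : 0 < b.length := List.length_pos_iff.2 hne
    have hwne : w ≠ [] := List.length_pos_iff.1 (by have := hb.mul_length_le_sum; lia)
    have hhead := hlast (b.length - 1) (Nat.sub_add_cancel hblen) rfl
    have hpos := Nat.pos_of_ne_zero (ne_of_mem_of_not_mem (getLastD_mem hwne) hzero.1)
    refine (List.count_le_length.trans_eq hvlen).lt_of_ne fun heq => ?_
    cases v with
    | nil => exact absurd hhead (Nat.not_lt_zero _)
    | cons a v =>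
      have := List.count_eq_length.1 (heq.trans hvlen.symm) a List.mem_cons_self
      simp only [List.headD_cons] at hhead
      lia

end Filling

/-! ### Necessary conditions -/

/-- Every family of parts of `b` has sum at most that of the equally many first entries of `ν`. If
`b` is a rearrangement of the partition `b⁺`, this is the dominance `b⁺ ⪯ ν`, but it restricts to
sublists of `b`. -/
def DominatedBy (b : List ℕ) (ν : ℕ → ℕ) : Prop :=
  ∀ s : List ℕ, s.Sublist b → s.sum ≤ ∑ i ∈ Finset.range s.length, ν i

lemma DominatedBy.of_append {b c : List ℕ} {ν : ℕ → ℕ} (h : DominatedBy (b ++ c) ν) :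
    DominatedBy b ν :=
  fun s hs => h s (hs.trans (List.sublist_append_left b c))

section Necessary

variable {b w : List ℕ} {ν : ℕ → ℕ}

lemma IsLRFilling.dominatedBy (hw : IsLRFilling b ν w) (hb : PartsGE b 1) : DominatedBy b ν := by
  induction b using List.reverseRecOn generalizing ν w with
  | nil => simp [DominatedBy]
  | append_singleton b m ih =>
    rw [partsGE_append_singleton] at hb
    obtain ⟨d, w', hd, hw', ⟨n, hn⟩, -, -⟩ := hw.exists_isHorizontalStrip hb.1
    intro s hs
    obtain ⟨s, u, rfl, hs, hu⟩ := List.sublist_append_iff.1 hs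
    have hsum := ih hw' hb.1 s hs
    have hsplit := sum_range_sub_add_sum_range hd.le s.length
    rcases List.sublist_singleton.1 hu with rfl | rfl
    · rw [List.append_nil]
      lia
    · have := hd.sum_range_le n s.length
      rw [List.sum_append, List.sum_singleton, List.length_append, List.length_singleton,
        Finset.sum_range_succ]
      lia

lemma IsLRFilling.first_row_le (hw : IsLRFilling b ν w) (hb : PartsGE b 1) :
    ν 0 + b.length ≤ b.sum + 1 := by
  induction b using List.reverseRecOn generalizing ν w with
  | nil => simp [hw.eq_zero_of_nil]
  | append_singleton b m ih =>
    rw [partsGE_append_singleton] at hb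
    obtain ⟨d, w', hd, hw', -, hle, hlt⟩ := hw.exists_isHorizontalStrip hb.1
    have hrow := ih hw' hb.1
    have := hd.le 0
    rw [Pi.sub_apply] at hrow
    rw [List.sum_append, List.sum_singleton, List.length_append, List.length_singleton]
    rcases eq_or_ne b [] with rfl | hne
    · have hzero : ν 0 - d 0 = 0 := hw'.eq_zero_of_nil 0
      rw [List.sum_nil, List.length_nil]
      lia
    · have := hlt hne
      lia

end Necessary

/-! ### Sufficient conditions -/

/-- `x`, `y`, `z` are the side lengths of a nondegenerate triangle. -/
def StrictTriangle (x y z : ℕ) : Prop := x < y + z ∧ y < x + z ∧ z < x + y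

/-- `ν` is a partition with exactly `r` parts, extended by zeros. -/
structure IsShape (ν : ℕ → ℕ) (r : ℕ) : Prop where
  antitone : Antitone ν
  pos_iff : ∀ i, 0 < ν i ↔ i < r

/-- `ν` is a partition with `r` parts satisfying the necessary conditions for being the content of
an LR filling of `R_b`, i.e. lying in the interval `[b⁺, (|b| - ℓ(b) + 1, ℓ(b) - 1)]`. -/
structure IsAdmissible (b : List ℕ) (ν : ℕ → ℕ) (r : ℕ) : Prop extends IsShape ν r where
  sum_eq : ∑ i ∈ Finset.range r, ν i = b.sum
  dominatedBy : DominatedBy b ν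
  first_row_le : ν 0 + b.length ≤ b.sum + 1

/-- A condition on a partition `ν` with `q + 2` parts under which some LR filling of `R_b` with
content `ν` has no `q + 2` as last letter, so that another row ending in `q + 2` can be appended:
either the first part of `ν` is as large as possible, or the last two parts of `ν` differ by some
`c` that forms a strict triangle with any two parts of `b`. -/
def BottomAvoidable (b : List ℕ) (ν : ℕ → ℕ) (q : ℕ) : Prop :=
  ν 0 + b.length = b.sum + 1 ∨ ∃ c, b.Pairwise (StrictTriangle · · c) ∧ ν (q + 1) + c ≤ ν q

/-- `ν`, with `r` parts, is the content of an LR filling of `R_b` whose last letter is not `r`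
in case this is required by `BottomAvoidable`. -/
def Realizable (b : List ℕ) (ν : ℕ → ℕ) (r : ℕ) : Prop :=
  ∃ w, IsLRFilling b ν w ∧ ∀ q, r = q + 2 → BottomAvoidable b ν q → w.getLastD 0 < r

/-- `d` is a horizontal strip of size `m` meeting the bottom row of `ν`, which has `q + 2` rows,
such that the shape `ν - d` is admissible for `b`, and such that appending to a filling of `R_b`
with content `ν - d` the row given by `d` yields a filling of `R_{b·m}` as required by
`Realizable`. -/
structure IsRemovableStrip (b : List ℕ) (m : ℕ) (ν d : ℕ → ℕ) (q : ℕ) : Prop where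
  strip : IsHorizontalStrip ν d
  sum_eq : ∑ i ∈ Finset.range (q + 2), d i = m
  bottom_pos : 0 < d (q + 1)
  bottom_lt : BottomAvoidable (b ++ [m]) ν q → d (q + 1) < m
  dominatedBy : DominatedBy b (ν - d)
  first_row_le : (ν - d) 0 + b.length ≤ b.sum + 1
  bottomAvoidable : d (q + 1) < ν (q + 1) → BottomAvoidable b (ν - d) q

section Shape

variable {ν d : ℕ → ℕ} {r n : ℕ}

lemma IsShape.eq_zero (hν : IsShape ν r) {i : ℕ} (hi : r ≤ i) : ν i = 0 :=
  Nat.eq_zero_of_not_pos fun hpos => hi.not_gt ((hν.pos_iff i).1 hpos)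

lemma IsShape.sum_range_of_le (hν : IsShape ν r) (hn : r ≤ n) :
    ∑ i ∈ Finset.range n, ν i = ∑ i ∈ Finset.range r, ν i :=
  Finset.eventually_constant_sum (fun _ hi => hν.eq_zero hi) hn

lemma IsShape.pos_sub (hν : IsShape ν (r + 1)) (hd : IsHorizontalStrip ν d) {i : ℕ} (hi : i < r) :
    0 < (ν - d) i := by
  have := hd i
  have := (hν.pos_iff (i + 1)).2 (Nat.succ_lt_succ hi)
  rw [Pi.sub_apply]
  lia

lemma IsShape.first_row_add_le_sum_sub (hν : IsShape ν (r + 1)) (hd : IsHorizontalStrip ν d)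
    {k : ℕ} (hk : k < r) : (ν - d) 0 + k ≤ ∑ i ∈ Finset.range (k + 1), (ν - d) i := by
  have hrows : (Finset.range k).card • 1 ≤ ∑ i ∈ Finset.range k, (ν - d) (i + 1) :=
    Finset.card_nsmul_le_sum _ _ _ fun i hi =>
      hν.pos_sub hd ((Nat.succ_le_of_lt (Finset.mem_range.1 hi)).trans_lt hk)
  rw [Finset.sum_range_succ', add_comm]
  simpa using hrows

lemma IsShape.sub_of_lt (hν : IsShape ν (r + 1)) (hd : IsHorizontalStrip ν d)
    (hr : d r < ν r) : IsShape (ν - d) (r + 1) where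
  antitone := hd.antitone_sub
  pos_iff i := by
    refine ⟨fun hi => (hν.pos_iff i).1 (hi.trans_le (Nat.sub_le _ _)), fun hi => ?_⟩
    rcases Nat.lt_succ_iff_lt_or_eq.1 hi with hi | rfl
    · exact hν.pos_sub hd hi
    · exact Nat.sub_pos_of_lt hr

lemma IsShape.sub_of_eq (hν : IsShape ν (r + 1)) (hd : IsHorizontalStrip ν d)
    (hr : d r = ν r) : IsShape (ν - d) r where
  antitone := hd.antitone_sub
  pos_iff i := by
    refine ⟨fun hi => not_le.1 fun hri => ?_, hν.pos_sub hd⟩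
    have hle := hd.antitone_sub hri
    rw [Pi.sub_apply ν d r, hr, Nat.sub_self] at hle
    exact hi.not_ge hle

end Shape

section Sufficient

variable {b : List ℕ} {m q r : ℕ} {ν d : ℕ → ℕ}

lemma IsRemovableStrip.isAdmissible (hd : IsRemovableStrip b m ν d q)
    (hν : IsAdmissible (b ++ [m]) ν (q + 2)) (hr : r ≤ q + 2) (hshape : IsShape (ν - d) r) :
    IsAdmissible b (ν - d) r where
  toIsShape := hshape
  sum_eq := by
    have hsum := sum_range_sub_add_sum_range hd.strip.le (q + 2)
    rw [hshape.sum_range_of_le hr, hd.sum_eq, hν.sum_eq, List.sum_append,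
      List.sum_singleton] at hsum
    exact Nat.add_right_cancel hsum
  dominatedBy := hd.dominatedBy
  first_row_le := hd.first_row_le

lemma IsRemovableStrip.exists_isLRFilling_sub (hd : IsRemovableStrip b m ν d q)
    (hν : IsAdmissible (b ++ [m]) ν (q + 2)) (ih : ∀ ν r, IsAdmissible b ν r → Realizable b ν r) :
    ∃ w, IsLRFilling b (ν - d) w ∧ w.getLastD 0 < q + 2 := by
  rcases (hd.strip.le (q + 1)).lt_or_eq with hlt | heq
  · obtain ⟨w, hw, hlast⟩ :=
      ih _ _ (hd.isAdmissible hν le_rfl (hν.toIsShape.sub_of_lt hd.strip hlt))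
    exact ⟨w, hw, hlast q rfl (hd.bottomAvoidable hlt)⟩
  · have hshape := hν.toIsShape.sub_of_eq hd.strip heq
    obtain ⟨w, hw, -⟩ := ih _ _ (hd.isAdmissible hν (Nat.le_succ _) hshape)
    exact ⟨w, hw, Nat.lt_succ_of_le (hw.getLastD_le fun _ => hshape.eq_zero)⟩

lemma IsRemovableStrip.realizable (hd : IsRemovableStrip b m ν d q)
    (hν : IsAdmissible (b ++ [m]) ν (q + 2)) (hb : PartsGE b 1)
    (ih : ∀ ν r, IsAdmissible b ν r → Realizable b ν r) :
    Realizable (b ++ [m]) ν (q + 2) := by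
  obtain ⟨w, hw, hlast⟩ := hd.exists_isLRFilling_sub hν ih
  refine ⟨w ++ rowWord d (q + 2), hw.append_rowWord hb hd.strip (fun _ => hν.eq_zero) hd.sum_eq
    hd.bottom_pos hlast, ?_⟩
  rintro q ⟨⟩ havoid
  obtain ⟨i, hi, hpos⟩ : ∃ i ∈ Finset.range (q + 1), 0 < d i := by
    rw [← Finset.sum_pos_iff]
    have hsum := hd.sum_eq
    have := hd.bottom_lt havoid
    rw [Finset.sum_range_succ] at hsum
    lia
  have hi := Finset.mem_range.1 hi
  exact (getLastD_append_rowWord_le w (hi.trans (Nat.lt_succ_self _)) hpos).trans_lt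
    (Nat.succ_lt_succ hi)

end Sufficient

/-! ### The greedy strip -/

/-- The largest `t ≤ ν 1` such that removing from `ν` the bottom cells of its first `t` columns and
`m - t` further cells of its first row leaves a first row which is not too long for `R_b`. -/
def greedyCap (b : List ℕ) (m : ℕ) (ν : ℕ → ℕ) : ℕ :=
  min m (min (ν 1) (b.sum + m + 1 - b.length - ν 0))

/-- The horizontal strip of size `m` consisting of the bottom cells of the first `greedyCap b m ν`
columns of `ν` and of the last cells of its first row. -/
def greedyStrip (b : List ℕ) (m : ℕ) (ν : ℕ → ℕ) : ℕ → ℕ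
  | 0 => m - greedyCap b m ν
  | i + 1 => min (ν (i + 1)) (greedyCap b m ν) - min (ν (i + 2)) (greedyCap b m ν)

section Greedy

variable {b : List ℕ} {m q : ℕ} {ν : ℕ → ℕ}

lemma greedyCap_le : greedyCap b m ν ≤ m := min_le_left _ _

lemma greedyCap_le_second_row : greedyCap b m ν ≤ ν 1 :=
  (min_le_right _ _).trans (min_le_left _ _)

lemma greedyCap_cases (b : List ℕ) (m : ℕ) (ν : ℕ → ℕ) :
    greedyCap b m ν = m ∨ greedyCap b m ν = ν 1 ∨
      b.sum + m + 1 ≤ ν 0 + greedyCap b m ν + b.length := by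
  unfold greedyCap
  lia

lemma greedyStrip_zero : greedyStrip b m ν 0 = m - greedyCap b m ν := rfl

lemma greedyStrip_bottom (hν : IsShape ν (q + 2)) :
    greedyStrip b m ν (q + 1) = min (ν (q + 1)) (greedyCap b m ν) := by
  rw [greedyStrip, hν.eq_zero le_rfl, Nat.zero_min, Nat.sub_zero]

lemma sum_range_greedyStrip (hν : Antitone ν) (k : ℕ) :
    ∑ i ∈ Finset.range (k + 1), greedyStrip b m ν i + min (ν (k + 1)) (greedyCap b m ν) = m := by
  induction k with
  | zero => simp [greedyStrip, greedyCap_le, greedyCap_le_second_row]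
  | succ k ih =>
    have : ν (k + 2) ≤ ν (k + 1) := hν (Nat.le_succ _)
    rw [Finset.sum_range_succ, greedyStrip]
    lia

lemma IsAdmissible.last_part_le (hν : IsAdmissible (b ++ [m]) ν (q + 2)) : m ≤ ν 0 := by
  simpa using hν.dominatedBy [m] (List.sublist_append_right b [m])

lemma IsAdmissible.first_row_le_append (hν : IsAdmissible (b ++ [m]) ν (q + 2)) :
    ν 0 + b.length ≤ b.sum + m := by
  simpa [← add_assoc] using hν.first_row_le

lemma IsAdmissible.two_rows_le (hν : IsAdmissible (b ++ [m]) ν (q + 2)) :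
    ν 0 + ν 1 ≤ b.sum + m := by
  have hle : ∑ i ∈ Finset.range 2, ν i ≤ ∑ i ∈ Finset.range (q + 2), ν i :=
    Finset.sum_le_sum_of_subset (Finset.range_mono (Nat.le_add_left 2 q))
  simpa [Finset.sum_range_succ ν 1, hν.sum_eq] using hle

lemma IsAdmissible.ne_nil (hν : IsAdmissible (b ++ [m]) ν (q + 2)) : b ≠ [] := by
  rintro rfl
  have := hν.two_rows_le
  have := hν.last_part_le
  have := (hν.pos_iff 1).2 (Nat.one_lt_succ_succ q)
  rw [List.sum_nil] at *
  lia

lemma IsAdmissible.second_row_le (hν : IsAdmissible (b ++ [m]) ν (q + 2)) (hb : PartsGE b 2)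
    (htri : (b ++ [m]).Triplewise StrictTriangle) :
    ν 1 + b.length ≤ b.sum + 1 := by
  have hrows := hν.two_rows_le
  have hlast := hν.last_part_le
  match b, hν.ne_nil with
  | [x], _ =>
    rw [List.sum_singleton] at *
    rw [List.length_singleton]
    lia
  | x :: y :: l, _ =>
    have hanti : ν 1 ≤ ν 0 := hν.antitone zero_le_one
    have hm : m < x + y :=
      ((List.pairwise_cons.1 ((List.triplewise_append.1 htri).2.2.2 m List.mem_cons_self)).1
        y List.mem_cons_self).2.2
    have hsum : [x, y].sum + 2 * (x :: y :: l).length ≤ (x :: y :: l).sum + 2 * [x, y].length :=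
      hb.sum_add_mul_length_le (by simp)
    rw [show [x, y].sum = x + y by simp, show [x, y].length = 2 from rfl] at hsum
    lia

lemma IsAdmissible.first_row_add_greedyCap_le (hν : IsAdmissible (b ++ [m]) ν (q + 2)) :
    ν 0 + greedyCap b m ν + b.length ≤ b.sum + m + 1 := by
  have := hν.first_row_le_append
  unfold greedyCap
  lia

lemma IsAdmissible.greedyCap_pos (hν : IsAdmissible (b ++ [m]) ν (q + 2)) (hm : 0 < m) :
    0 < greedyCap b m ν := by
  have := hν.first_row_le_append
  have : 0 < ν 1 := (hν.pos_iff 1).2 (Nat.one_lt_succ_succ q)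
  unfold greedyCap
  lia

lemma IsAdmissible.isHorizontalStrip_greedyStrip (hν : IsAdmissible (b ++ [m]) ν (q + 2))
    (hb : PartsGE b 2) (htri : (b ++ [m]).Triplewise StrictTriangle) :
    IsHorizontalStrip ν (greedyStrip b m ν)
  | 0 => by
    have : ν 1 ≤ ν 0 := hν.antitone zero_le_one
    have := hν.last_part_le
    have := hν.second_row_le hb htri
    rw [greedyStrip_zero]
    rcases greedyCap_cases b m ν with h | h | h <;> lia
  | i + 1 => by
    have : ν (i + 2) ≤ ν (i + 1) := hν.antitone (Nat.le_succ _)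
    rw [greedyStrip]
    lia

lemma IsAdmissible.dominatedBy_sub_greedyStrip (hν : IsAdmissible (b ++ [m]) ν (q + 2))
    (hb : PartsGE b 1) (hd : IsHorizontalStrip ν (greedyStrip b m ν)) :
    DominatedBy b (ν - greedyStrip b m ν) := by
  intro s hs
  cases hk : s.length with
  | zero => simp [List.length_eq_zero_iff.1 hk]
  | succ k =>
    have hsub := sum_range_sub_add_sum_range hd.le (k + 1)
    have hstrip := sum_range_greedyStrip (b := b) (m := m) hν.antitone k
    rcases le_or_gt (ν (k + 1)) (greedyCap b m ν) with hle | hgt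
    · have hdom := hν.dominatedBy (s ++ [m]) (hs.append (List.Sublist.refl _))
      rw [List.sum_append, List.sum_singleton, List.length_append, List.length_singleton, hk,
        Finset.sum_range_succ] at hdom
      lia
    · have hlt : k + 1 < q + 2 := (hν.pos_iff _).1 (Nat.zero_lt_of_lt hgt)
      rcases greedyCap_cases b m ν with hcap | hcap | hcap
      · have hdom := hν.dominatedBy.of_append s hs
        rw [hk] at hdom
        lia
      · exact absurd (hν.antitone (Nat.le_add_left 1 k)) (hcap ▸ hgt).not_ge
      · have hrows := hν.toIsShape.first_row_add_le_sum_sub hd (Nat.lt_of_succ_lt_succ hlt)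
        have hparts := hb.sum_add_mul_length_le hs
        have hlen := hs.length_le
        have hd0 := hd.le 0
        rw [Pi.sub_apply, greedyStrip_zero] at hrows
        rw [greedyStrip_zero] at hd0
        lia

lemma IsAdmissible.isRemovableStrip_greedyStrip (hν : IsAdmissible (b ++ [m]) ν (q + 2))
    (hb : PartsGE b 2) (hm : 0 < m) (htri : (b ++ [m]).Triplewise StrictTriangle)
    (hlt : BottomAvoidable (b ++ [m]) ν q → min (ν (q + 1)) (greedyCap b m ν) < m) :
    IsRemovableStrip b m ν (greedyStrip b m ν) q := by
  have hd := hν.isHorizontalStrip_greedyStrip hb htri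
  have hbot := greedyStrip_bottom (b := b) (m := m) hν.toIsShape
  have hd0 := hd.le 0
  have hfirst := hν.first_row_add_greedyCap_le
  have hcap_le : greedyCap b m ν ≤ m := greedyCap_le
  rw [greedyStrip_zero] at hd0
  refine ⟨hd, ?_, ?_, hbot ▸ hlt,
    hν.dominatedBy_sub_greedyStrip (hb.mono one_le_two) hd, ?_, fun hbl => ?_⟩
  · simpa [hν.eq_zero le_rfl] using
      sum_range_greedyStrip (b := b) (m := m) hν.antitone (q + 1)
  · rw [hbot]
    exact lt_min ((hν.pos_iff _).2 (Nat.lt_succ_self _)) (hν.greedyCap_pos hm)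
  · rw [Pi.sub_apply, greedyStrip_zero]
    lia
  · rw [hbot] at hbl
    have hsecond : ν (q + 1) ≤ ν 1 := hν.antitone (Nat.le_add_left 1 q)
    rcases greedyCap_cases b m ν with hcap | hcap | hcap
    · refine Or.inr ⟨m, (List.triplewise_append.1 htri).2.2.2 m List.mem_cons_self, ?_⟩
      have := hd q
      rw [Pi.sub_apply, Pi.sub_apply, hbot]
      lia
    · lia
    · refine Or.inl ?_
      rw [Pi.sub_apply, greedyStrip_zero]
      lia

end Greedy

/-! ### The split strip -/

/-- The horizontal strip of size `m` with a single cell in row `q` and all others in row `q + 1`. -/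
def splitStrip (m q : ℕ) : ℕ → ℕ := Pi.single q 1 + Pi.single (q + 1) (m - 1)

section SplitStrip

variable {b s : List ℕ} {m q c i n : ℕ} {ν : ℕ → ℕ}

lemma splitStrip_self : splitStrip m q q = 1 := by
  simp [splitStrip]

lemma splitStrip_succ : splitStrip m q (q + 1) = m - 1 := by
  simp [splitStrip]

lemma splitStrip_of_lt (hi : i < q) : splitStrip m q i = 0 := by
  simp [splitStrip, hi.ne, (hi.trans (Nat.lt_succ_self q)).ne]

lemma sum_range_splitStrip_of_le (hn : n ≤ q) : ∑ i ∈ Finset.range n, splitStrip m q i = 0 :=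
  Finset.sum_eq_zero fun _ hi => splitStrip_of_lt ((Finset.mem_range.1 hi).trans_le hn)

lemma sum_range_splitStrip_succ : ∑ i ∈ Finset.range (q + 1), splitStrip m q i = 1 := by
  rw [Finset.sum_range_succ, sum_range_splitStrip_of_le le_rfl, splitStrip_self]

lemma sum_range_splitStrip (hm : 0 < m) : ∑ i ∈ Finset.range (q + 2), splitStrip m q i = m := by
  rw [Finset.sum_range_succ, sum_range_splitStrip_succ, splitStrip_succ]
  exact Nat.add_sub_cancel' hm

lemma IsShape.isHorizontalStrip_splitStrip (hν : IsShape ν (q + 2)) (hq : ν (q + 1) < ν q)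
    (hm : m ≤ ν (q + 1)) : IsHorizontalStrip ν (splitStrip m q) := by
  intro i
  rcases lt_trichotomy i q with hi | rfl | hi
  · rw [splitStrip_of_lt hi]
    exact hν.antitone (Nat.le_succ i)
  · rwa [splitStrip_self]
  · rcases (Nat.succ_le_of_lt hi).eq_or_lt with rfl | hi
    · rw [splitStrip_succ, hν.eq_zero le_rfl]
      lia
    · have hne : i ≠ q ∧ i ≠ q + 1 := by lia
      simpa [splitStrip, hne] using hν.antitone (Nat.le_succ i)

lemma sum_add_length_le_sum_range (hν : Antitone ν) {k : ℕ} (hs : ∀ x ∈ s, x < ν k)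
    (hlen : s.length ≤ k + 1) :
    s.sum + s.length ≤ ∑ i ∈ Finset.range s.length, ν i := by
  calc
    s.sum + s.length = (s.map (· + 1)).sum := by simp [List.sum_map_add]
    _ ≤ (s.map (· + 1)).length • ν k := List.sum_le_card_nsmul _ _ (by simpa using hs)
    _ = ∑ _i ∈ Finset.range s.length, ν k := by simp
    _ ≤ ∑ i ∈ Finset.range s.length, ν i := Finset.sum_le_sum fun i hi =>
      hν (Nat.le_of_lt_succ ((Finset.mem_range.1 hi).trans_le hlen))

lemma IsAdmissible.dominatedBy_sub_splitStrip (hν : IsAdmissible (b ++ [m]) ν (q + 2))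
    (hm : 0 < m) (hd : IsHorizontalStrip ν (splitStrip m q)) (hb : ∀ x ∈ b, x < ν q) :
    DominatedBy b (ν - splitStrip m q) := by
  intro s hs
  have hsub := sum_range_sub_add_sum_range hd.le s.length
  rcases lt_trichotomy s.length (q + 1) with hlt | heq | hgt
  · rw [sum_range_splitStrip_of_le (Nat.le_of_lt_succ hlt)] at hsub
    exact (hν.dominatedBy.of_append s hs).trans_eq hsub.symm
  · have := sum_add_length_le_sum_range hν.antitone (fun x hx => hb x (hs.subset hx)) heq.le
    have : ∑ i ∈ Finset.range s.length, splitStrip m q i = 1 := by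
      rw [heq, sum_range_splitStrip_succ]
    lia
  · have htotal := sum_range_sub_add_sum_range hd.le (q + 2)
    rw [sum_range_splitStrip hm, hν.sum_eq, List.sum_append, List.sum_singleton] at htotal
    exact (hs.sum_le_sum fun _ _ => Nat.zero_le _).trans
      ((Nat.add_right_cancel htotal).symm.trans_le
        (Finset.sum_le_sum_of_subset (Finset.range_mono hgt)))

lemma IsAdmissible.isRemovableStrip_splitStrip (hν : IsAdmissible (b ++ [m]) ν (q + 2))
    (hm : 2 ≤ m) (hrow : ν 0 + b.length ≤ b.sum + 1) (hmq : m ≤ ν (q + 1))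
    (hc : (b ++ [m]).Pairwise (StrictTriangle · · c)) (hcq : ν (q + 1) + c ≤ ν q) :
    IsRemovableStrip b m ν (splitStrip m q) q := by
  obtain ⟨hcb, -, hcm⟩ := List.pairwise_append.1 hc
  have hpart : ∀ x ∈ b, StrictTriangle x m c := fun x hx => hcm x hx m List.mem_cons_self
  have hcpos : 0 < c := by
    obtain ⟨x, hx⟩ := List.exists_mem_of_ne_nil b hν.ne_nil
    obtain ⟨h₁, h₂, -⟩ := hpart x hx
    lia
  have hd := hν.toIsShape.isHorizontalStrip_splitStrip (by lia) hmq
  refine ⟨hd, sum_range_splitStrip (by lia), ?_, fun _ => ?_,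
    hν.dominatedBy_sub_splitStrip (by lia) hd fun x hx => ?_, ?_,
    fun _ => Or.inr ⟨c, hcb, ?_⟩⟩
  · rw [splitStrip_succ]
    lia
  · rw [splitStrip_succ]
    lia
  · have := (hpart x hx).1
    lia
  · exact (Nat.add_le_add_right (Nat.sub_le _ _) _).trans hrow
  · rw [Pi.sub_apply, Pi.sub_apply, splitStrip_succ, splitStrip_self]
    lia

end SplitStrip

section Realizability

variable {b : List ℕ} {m q r : ℕ} {ν : ℕ → ℕ}

-- The greedy strip only fails when it lies in the bottom row; then one of its cells is moved up.
lemma IsAdmissible.exists_isRemovableStrip (hν : IsAdmissible (b ++ [m]) ν (q + 2))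
    (hb : PartsGE b 2) (hm : 2 ≤ m) (htri : (b ++ [m]).Triplewise StrictTriangle) :
    ∃ d, IsRemovableStrip b m ν d q := by
  by_cases hlt : BottomAvoidable (b ++ [m]) ν q → min (ν (q + 1)) (greedyCap b m ν) < m
  · exact ⟨_, hν.isRemovableStrip_greedyStrip hb (by lia) htri hlt⟩
  · obtain ⟨havoid, hbottom⟩ := Classical.not_imp.1 hlt
    obtain ⟨hmq, hcap⟩ := le_min_iff.1 (not_lt.1 hbottom)
    have hrow := hν.first_row_add_greedyCap_le
    rcases havoid with hmax | ⟨c, hc, hcq⟩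
    · rw [List.sum_append, List.sum_singleton, List.length_append, List.length_singleton] at hmax
      lia
    · exact ⟨_, hν.isRemovableStrip_splitStrip hm (by lia) hmq hc hcq⟩

lemma IsAdmissible.realizable_nil (hν : IsAdmissible [] ν r) : Realizable [] ν r := by
  have hr : r = 0 := by
    by_contra hr
    have hpos := (hν.pos_iff 0).2 (Nat.pos_of_ne_zero hr)
    exact hpos.ne' (Finset.sum_eq_zero_iff.1 hν.sum_eq 0 (by simpa using Nat.pos_of_ne_zero hr))
  subst hr
  have hzero : ν = fun _ => 0 := funext fun i => hν.eq_zero (Nat.zero_le i)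
  exact ⟨[], hzero ▸ isLRFilling_nil, fun q hq => absurd hq (Nat.succ_ne_zero _).symm⟩

lemma IsAdmissible.realizable_singleton (hν : IsAdmissible [m] ν 1) : Realizable [m] ν 1 := by
  have hd : IsHorizontalStrip ν ν := fun i => by
    rw [hν.eq_zero (Nat.le_add_left 1 i), zero_add]
  have hnil : IsLRFilling [] (ν - ν) [] := by
    rw [tsub_self]
    exact isLRFilling_nil
  refine ⟨[] ++ rowWord ν 1, hnil.append_rowWord (by simp [PartsGE]) hd (fun _ => hν.eq_zero) ?_
    ((hν.pos_iff 0).2 one_pos) one_pos, fun q hq => ?_⟩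
  · simpa using hν.sum_eq
  · lia

lemma IsAdmissible.eq_nil_of_one (hν : IsAdmissible (b ++ [m]) ν 1) : b = [] := by
  have hrow := hν.first_row_le
  have hsum := hν.sum_eq
  rw [Finset.sum_range_one] at hsum
  rw [List.length_append, List.length_singleton] at hrow
  exact List.length_eq_zero_iff.1 (by lia)

theorem IsAdmissible.realizable (hν : IsAdmissible b ν r) (hb : PartsGE b 2)
    (htri : b.Triplewise StrictTriangle) : Realizable b ν r := by
  induction b using List.reverseRecOn generalizing ν r with
  | nil => exact hν.realizable_nil
  | append_singleton b m ih =>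
    obtain ⟨hb, hm⟩ := partsGE_append_singleton.1 hb
    match r with
    | 0 => exact absurd hν.sum_eq (by simp; lia)
    | 1 =>
      obtain rfl := hν.eq_nil_of_one
      exact hν.realizable_singleton
    | q + 2 =>
      obtain ⟨d, hd⟩ := hν.exists_isRemovableStrip hb hm htri
      exact hd.realizable hν (hb.mono one_le_two) fun ν r hν =>
        ih hν hb (List.triplewise_append.1 htri).1

end Realizability

/-! ### Partitions and the dominance order -/

section Partition

variable {b bp nu : List ℕ}

lemma IsPartition.isShape (hnu : IsPartition nu) : IsShape (fun i => nu.getD i 0) nu.length where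
  antitone := antitone_nat_of_succ_le fun i => by
    rcases lt_or_ge (i + 1) nu.length with hi | hi
    · exact pairwise_ge_iff_getD.1 hnu.1 i hi
    · rw [List.getD_eq_default _ _ hi]
      exact Nat.zero_le _
  pos_iff i := by
    refine ⟨fun hpos => not_le.1 fun hi => ?_, fun hi => ?_⟩
    · rw [List.getD_eq_default _ _ hi] at hpos
      exact hpos.false
    · rw [List.getD_eq_getElem _ _ hi]
      exact hnu.2 _ (List.getElem_mem hi)

lemma sum_range_length_getD (l : List ℕ) : ∑ i ∈ Finset.range l.length, l.getD i 0 = l.sum := by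
  rw [← sum_take_eq_sum_range_getD, List.take_length]

lemma domLE_iff_dominatedBy (hperm : bp.Perm b) (hsort : bp.Pairwise (· ≥ ·)) :
    DomLE bp nu ↔ b.sum = nu.sum ∧ DominatedBy b fun i => nu.getD i 0 := by
  rw [DomLE, hperm.sum_eq]
  refine and_congr_right fun _ => ⟨fun h s hs => ?_, fun h k => ?_⟩
  · obtain ⟨s', hperm', hs'⟩ := hs.subperm.trans hperm.symm.subperm
    rw [← sum_take_eq_sum_range_getD, ← hperm'.sum_eq, ← hperm'.length_eq]
    exact (sum_le_sum_take_of_sublist hsort hs').trans (h _)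
  · obtain ⟨s, hs, hsb⟩ := (List.take_sublist k bp).subperm.trans hperm.subperm
    rw [← hs.sum_eq, sum_take_eq_sum_range_getD]
    refine (h s hsb).trans (Finset.sum_le_sum_of_subset (Finset.range_mono ?_))
    rw [hs.length_eq]
    exact List.length_take_le k bp

lemma domLE_pair_iff {a c : ℕ} : DomLE nu [a, c] ↔ nu.sum = a + c ∧ nu.getD 0 0 ≤ a := by
  rw [DomLE, show [a, c].sum = a + c by simp]
  refine and_congr_right fun hsum => ⟨fun h => ?_, fun h k => ?_⟩
  · simpa [sum_take_eq_sum_range_getD] using h 1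
  · match k with
    | 0 => simp
    | 1 => simpa [sum_take_eq_sum_range_getD] using h
    | k + 2 => simpa [hsum] using sum_take_le_sum nu (k + 2)

lemma triplewise_strictTriangle
    (htri : ∀ i j k, i < b.length → j < b.length → k < b.length →
      i ≠ j → i ≠ k → j ≠ k → b.getD k 0 < b.getD i 0 + b.getD j 0) :
    b.Triplewise StrictTriangle := by
  refine List.triplewise_iff_getElem.2 fun i j k hij hjk hk => ?_
  have hj := hjk.trans hk
  have hi := hij.trans hj
  have hik := hij.trans hjk
  simp only [← List.getD_eq_getElem _ 0]
  exact ⟨htri j k i hj hk hi hjk.ne hij.ne' hik.ne', htri i k j hi hk hj hik.ne hij.ne hjk.ne',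
    htri i j k hi hj hk hij.ne hik.ne hjk.ne⟩

theorem inSupportConn_iff_of_triplewise (hb : PartsGE b 2) (htri : b.Triplewise StrictTriangle)
    (hnu : IsPartition nu) :
    InSupportConn b nu ↔ b.sum = nu.sum ∧ DominatedBy b (fun i => nu.getD i 0) ∧
      nu.getD 0 0 + b.length ≤ b.sum + 1 := by
  have hpos : PartsGE b 1 := hb.mono one_le_two
  rw [inSupportConn_iff]
  constructor
  · rintro ⟨w, hw⟩
    refine ⟨?_, hw.dominatedBy hpos, hw.first_row_le hpos⟩
    rw [← hw.sum_range_eq fun _ => hnu.isShape.eq_zero, sum_range_length_getD]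
  · rintro ⟨hsum, hdom, hrow⟩
    obtain ⟨w, hw, -⟩ := IsAdmissible.realizable
      ⟨hnu.isShape, (sum_range_length_getD nu).trans hsum.symm, hdom, hrow⟩ hb htri
    exact ⟨w, hw⟩

end Partition

/-- Theorem `triangle`(b): let `b` be a composition with parts ≥ 2 and
`ℓ(b) ≥ 3`.  If every 3-element sub-multiset of the parts of `b` satisfies the strict
triangle inequality, then the connected ribbon `R_b` has full Schur support
`[b⁺, (|b|−ℓ(b)+1, ℓ(b)−1)]`, where `b⁺` is the weakly decreasing rearrangement of `b`. -/
theorem strict_triangle_implies_full_support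
    (b : List ℕ) (h2 : PartsGE b 2) (h3 : 3 ≤ b.length)
    (htri : ∀ i j k, i < b.length → j < b.length → k < b.length →
      i ≠ j → i ≠ k → j ≠ k → b.getD k 0 < b.getD i 0 + b.getD j 0) :
    ∀ bp : List ℕ, bp.Perm b → bp.Pairwise (· ≥ ·) →
      SupportSetConn b =
        {nu | IsPartition nu ∧ DomLE bp nu ∧
          DomLE nu [b.sum - (b.length - 1), b.length - 1]} := by
  intro bp hperm hsort
  have hlen := h2.mul_length_le_sum
  ext nu
  refine and_congr_right fun hnu => ?_
  rw [inSupportConn_iff_of_triplewise h2 (triplewise_strictTriangle htri) hnu,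
    domLE_iff_dominatedBy hperm hsort, domLE_pair_iff, and_assoc]
  exact and_congr_right fun hsum => and_congr_right fun _ => by lia

end RibbonSupport
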